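/- Let (A,b) be a unital A∞-algebra over a field k of characteristic 0 and P a homogeneous normalized Hochschild cochain of degree |P| in C^•(A). Then ∂_Hoch∘L_P − (−1)^{|P|−1}L_P∘∂_Hoch = L_{∂P}, where ∂P := b∘P − (−1)^{|P|−1}P∘b is the Hochschild cochain differential; in particular P ↦ L_P is a chain map from the normalized shifted Hochschild cochain complex C̄^•(A)[1] to the endomorphism complex End_k(C_•(A)). -/

import Mathlib

open Finsupp
open scoped Classical

namespace NC

variable (S : Type) [CommRing S] {κ : Type}

/-- The sign `(−1)^n` for `n : ℤ`. -/
noncomputable def sgn (n : ℤ) : S := if Even n then 1 else -1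

/-- Degree of a basis element of `A` (the unit `none` = `1_A` has degree `0`). -/
def dgO (dg : κ → ℤ) : Option κ → ℤ := fun x => x.elim 0 dg

/-- `A`: a graded vector space with homogeneous basis `Option κ` (`none` = the unit `1_A`,
`some x` of degree `dg x`). -/
abbrev Avs (κ : Type) (S : Type) [CommRing S] := Option κ →₀ S

/-- Hochschild chains `C_•(A) = A ⊗ B(Ā)`, with basis `a₀ ⊗ [a₁|…|aₙ]`
(`a₀` a basis element of `A`, the `aᵢ` basis elements of `Ā`). -/
abbrev Cch (κ : Type) (S : Type) [CommRing S] := (Option κ × List κ) →₀ S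

variable (dg : κ → ℤ)

/-- `ε` of a list of `A`-basis elements: `Σ (|a|−1)`. -/
def epsO : List (Option κ) → ℤ := fun ls => (ls.map fun x => dgO dg x - 1).sum

/-- `ε` of a list of `Ā`-basis elements: `εᵢ = Σ_{r≤i} (|a_r|−1)`. -/
def epsK : List κ → ℤ := fun ms => (ms.map fun x => dg x - 1).sum

/-- `μ_j = |a₀|−1+ε_j`. -/
def muK (a₀ : Option κ) (ms : List κ) (j : ℕ) : ℤ :=
  dgO dg a₀ - 1 + epsK dg (ms.take j)

/-- A (component family of a) Hochschild cochain is a function on basis words; `HasArity P p`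
says it is concentrated in arity `p`. -/
def HasArity (P : List (Option κ) → Avs κ S) (p : ℕ) : Prop :=
  ∀ ls, ls.length ≠ p → P ls = 0

/-- Normalized cochain: vanishes as soon as one entry is the unit `1_A`. -/
def IsNormalized (P : List (Option κ) → Avs κ S) : Prop :=
  ∀ ls, none ∈ ls → P ls = 0

/-- Homogeneous of degree `dP` in `C^•(A)`: `P[a₁|…|aₚ]` has degree `Σ(|aᵢ|−1) + dP`. -/
def IsHomog (P : List (Option κ) → Avs κ S) (dP : ℤ) : Prop :=
  ∀ ls x, x ∈ (P ls).support → dgO dg x = epsO dg ls + dP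

/-- Multilinear insertion of a general vector of `A` into a slot of a cochain. -/
noncomputable def insEval (P : List (Option κ) → Avs κ S) (pre : List (Option κ))
    (v : Avs κ S) (post : List (Option κ)) : Avs κ S :=
  v.sum fun x c => c • P (pre ++ x :: post)

/-- The Gerstenhaber insertion `P∘Q`, the inner cochain `Q` being of `C^•`-degree `dQ`:
`(P∘Q)[a₁|…|aₙ] = Σ (−1)^{(|Q|−1)ε_i} P[a₁|…|a_i|Q[a_{i+1}|…|a_{i+v}]|…|aₙ]`. -/
noncomputable def circC (P Q : List (Option κ) → Avs κ S) (dQ : ℤ) :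
    List (Option κ) → Avs κ S := fun ls =>
  ∑ i ∈ Finset.range (ls.length + 1), ∑ v ∈ Finset.range (ls.length + 1),
    if i + v ≤ ls.length then
      sgn S ((dQ - 1) * epsO dg (ls.take i)) •
        insEval S P (ls.take i) (Q ((ls.drop i).take v)) (ls.drop (i + v))
    else 0

/-- Gerstenhaber bracket `[P,Q] = P∘Q − (−1)^{(|P|−1)(|Q|−1)} Q∘P`. -/
noncomputable def gBr (P Q : List (Option κ) → Avs κ S) (dP dQ : ℤ) :
    List (Option κ) → Avs κ S := fun ls =>
  circC S dg P Q dQ ls - sgn S ((dP - 1) * (dQ - 1)) • circC S dg Q P dP ls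

/-- `v ⊗ [ms]` for a general vector `v` of `A` in the module slot of `C_•(A)`. -/
noncomputable def genA (v : Avs κ S) (ms : List κ) : Cch κ S :=
  v.sum fun x c => Finsupp.single (x, ms) c

/-- `a₀ ⊗ [pre | v̄ | post]` for a general vector `v` of `A` inserted in a bar slot (the class
of the unit `1_A` in `Ā = A/k·1_A` being zero). -/
noncomputable def genBar (a₀ : Option κ) (pre : List κ) (v : Avs κ S) (post : List κ) :
    Cch κ S :=
  v.sum fun x c => Option.elim x 0 fun y => Finsupp.single (a₀, pre ++ y :: post) c

/-- The value of the operator `L_P` on the generator `a₀ ⊗ [a₁|…|aₙ]`: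
`L_P(a₀⊗[a₁|…|aₙ]) = Σ (−1)^{(|P|−1)μ_j} a₀⊗[a₁|…|a_j|P[a_{j+1}|…|a_{j+l}]|…|aₙ]
 + Σ (−1)^{μ_i(μ_n−μ_i)} s⁻¹P([a_{i+1}|…|aₙ|a₀|…|a_j]) ⊗ [a_{j+1}|…|a_i]`
(the second sum over the cyclic terms in which `P` includes `a₀`). -/
noncomputable def Lgen (P : List (Option κ) → Avs κ S) (dP : ℤ)
    (a₀ : Option κ) (ms : List κ) : Cch κ S :=
  (∑ j ∈ Finset.range (ms.length + 1), ∑ l ∈ Finset.range (ms.length + 1),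
    if j + l ≤ ms.length then
      sgn S ((dP - 1) * muK dg a₀ ms j) •
        genBar S a₀ (ms.take j) (P (((ms.drop j).take l).map some)) (ms.drop (j + l))
    else 0)
  + ∑ i ∈ Finset.range (ms.length + 1), ∑ j ∈ Finset.range (ms.length + 1),
      if j ≤ i then
        sgn S (muK dg a₀ ms i * (muK dg a₀ ms ms.length - muK dg a₀ ms i)) •
          genA S (P ((ms.drop i).map some ++ a₀ :: (ms.take j).map some))
            ((ms.drop j).take (i - j))
      else 0

/-- The operator `L_P : C_•(A) → C_•(A)` associated to a cochain `P` of `C^•`-degree `dP`. -/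
noncomputable def Lop (P : List (Option κ) → Avs κ S) (dP : ℤ) : Cch κ S →ₗ[S] Cch κ S :=
  Finsupp.lift (Cch κ S) S (Option κ × List κ) fun g => Lgen S dg P dP g.1 g.2

/-- The Hochschild boundary `∂_Hoch` of the (curved) A∞-structure `b` (a degree `2` cochain):
it is given on generators by exactly the formula `L_b`. -/
noncomputable def hochOp (b : List (Option κ) → Avs κ S) : Cch κ S →ₗ[S] Cch κ S :=
  Lop S dg b 2

/-- `a ⊗ [ls]` where the bar entries are allowed to be unit basis elements (which die in
`Ā`). -/
noncomputable def genO (a : Option κ) (ls : List (Option κ)) : Cch κ S :=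
  if none ∈ ls then 0 else Finsupp.single (a, ls.reduceOption) 1

/-- Connes' operator `B` on generators:
`B(a₀⊗[a₁|…|aₙ]) = Σᵢ (−1)^{(ε_{i−1}+|a₀|−1)(ε_n−ε_{i−1})} 1_A⊗[a_i|…|aₙ|a₀|a₁|…|a_{i−1}]`. -/
noncomputable def Bgen (a₀ : Option κ) (ms : List κ) : Cch κ S :=
  ∑ i ∈ Finset.range (ms.length + 1),
    sgn S ((epsK dg (ms.take (i - 1)) + dgO dg a₀ - 1) *
        (epsK dg ms - epsK dg (ms.take (i - 1)))) •
      genO S none (((a₀ :: ms.map some).drop i) ++ ((a₀ :: ms.map some).take i))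

/-- Connes' operator `B : C_•(A) → C_•(A)`. -/
noncomputable def Bop : Cch κ S →ₗ[S] Cch κ S :=
  Finsupp.lift (Cch κ S) S (Option κ × List κ) fun g => Bgen S dg g.1 g.2

/-- A unital curved A∞-structure on `A` (components `b` of the degree `1` coderivation `b` of
`BA`, written with values in `A`): homogeneity, `b∘b = 0`, and the unit axioms. -/
structure IsUnitalCurvedAInf (b : List (Option κ) → Avs κ S) : Prop where
  homog : IsHomog S dg b 2
  sq : ∀ ls, circC S dg b b 2 ls = 0
  unit1 : b [none] = 0
  unitR : ∀ x : Option κ, b [x, none] = sgn S (dgO dg x) • Finsupp.single x 1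
  unitL : ∀ x : Option κ, b [none, x] = Finsupp.single x 1
  unitHi : ∀ ls, 3 ≤ ls.length → none ∈ ls → b ls = 0

/-- A unital A∞-structure: a unital curved A∞-structure with `b₀ = 0`. -/
structure IsUnitalAInf (b : List (Option κ) → Avs κ S) extends
    IsUnitalCurvedAInf S dg b : Prop where
  curv0 : b [] = 0

end NC

namespace NC

section Aux

variable {S : Type} [CommRing S] {κ : Type} {M N : Type} [AddCommGroup M] [Module S M]
  [AddCommGroup N] [Module S N] {X : Type}

/-- Sum over all splittings of a word in two pieces. -/
def Sp (f : List X → List X → M) (w : List X) : M :=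
  ∑ i ∈ Finset.range (w.length + 1), f (w.take i) (w.drop i)

/-- Sum over all splittings of a word in three pieces. -/
def Sp3 (f : List X → List X → List X → M) (w : List X) : M :=
  Sp (fun u r => Sp (fun v t => f u v t) r) w

/-- Sum over all splittings of a word in five pieces. -/
def Sp5 (f : List X → List X → List X → List X → List X → M) (w : List X) : M :=
  Sp3 (fun a b r => Sp3 (fun c d e => f a b c d e) r) w

lemma Sp_nil (f : List X → List X → M) : Sp f [] = f [] [] := by simp [Sp]

lemma Sp_cons (f : List X → List X → M) (x : X) (w : List X) :
    Sp f (x :: w) = f [] (x :: w) + Sp (fun u v => f (x :: u) v) w := by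
  unfold Sp
  rw [List.length_cons, Finset.sum_range_succ' _ (w.length + 1)]
  simp [add_comm]

lemma Sp_add (f g : List X → List X → M) (w : List X) :
    Sp (fun u v => f u v + g u v) w = Sp f w + Sp g w := by
  simp [Sp, Finset.sum_add_distrib]

lemma Sp_sub (f g : List X → List X → M) (w : List X) :
    Sp (fun u v => f u v - g u v) w = Sp f w - Sp g w := by
  simp [Sp, Finset.sum_sub_distrib]

lemma Sp_smul (c : S) (f : List X → List X → M) (w : List X) :
    Sp (fun u v => c • f u v) w = c • Sp f w := by
  simp [Sp, Finset.smul_sum]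

lemma Sp_zero (w : List X) :
    Sp (fun _ _ => (0 : M)) w = 0 := by
  simp [Sp]

lemma Sp_map (φ : M →ₗ[S] N) (f : List X → List X → M) (w : List X) :
    φ (Sp f w) = Sp (fun u v => φ (f u v)) w := by
  simp [Sp]

lemma Sp_comm {Y : Type} (f : List X → List X → List Y → List Y → M) (w : List X) (z : List Y) :
    Sp (fun u v => Sp (fun s t => f u v s t) z) w = Sp (fun s t => Sp (fun u v => f u v s t) w) z := by
  simp only [Sp]
  exact Finset.sum_comm

lemma Sp_assoc (f : List X → List X → List X → M) (w : List X) :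
    Sp (fun u r => Sp (fun u1 u2 => f u1 u2 r) u) w
      = Sp (fun u1 r => Sp (fun u2 t => f u1 u2 t) r) w := by
  induction w generalizing f with
  | nil => simp [Sp_nil]
  | cons x w ih =>
    simp only [Sp_cons, Sp_nil, Sp_add]
    rw [ih (fun u1 u2 t => f (x :: u1) u2 t)]
    abel

lemma Sp_mid (f : List X → List X → M) (u t : List X) (y : X) :
    Sp f (u ++ y :: t) = Sp (fun u1 u2 => f u1 (u2 ++ y :: t)) u
      + Sp (fun t1 t2 => f (u ++ y :: t1) t2) t := by
  induction u generalizing f with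
  | nil => simp [Sp_nil, Sp_cons]
  | cons x u ih =>
    simp only [List.cons_append, Sp_cons]
    rw [ih (fun u v => f (x :: u) v)]
    abel

lemma Sp_last (f : List X → List X → M) (w : List X) (h : ∀ u v, v ≠ [] → f u v = 0) :
    Sp f w = f w [] := by
  induction w generalizing f with
  | nil => simp [Sp_nil]
  | cons x w ih =>
    rw [Sp_cons, h _ _ (by simp), ih _ (fun u v hv => h _ _ hv), zero_add]

lemma Sp_first (f : List X → List X → M) (w : List X) (h : ∀ u v, u ≠ [] → f u v = 0) :
    Sp f w = f [] w := by
  cases w with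
  | nil => simp [Sp_nil]
  | cons x w =>
    have : (fun u v => f (x :: u) v) = fun _ _ => (0 : M) := by
      funext u v; exact h _ _ (by simp)
    rw [Sp_cons, this, Sp_zero, add_zero]

lemma Sp_snoc (f : List X → List X → M) (w : List X) (x : X) :
    Sp f (w ++ [x]) = Sp (fun u v => f u (v ++ [x])) w + f (w ++ [x]) [] := by
  rw [Sp_mid, Sp_nil]

lemma Sp_listmap {Y : Type} (g : Y → X) (f : List X → List X → M) (w : List Y) :
    Sp f (w.map g) = Sp (fun u v => f (u.map g) (v.map g)) w := by
  simp [Sp]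

lemma Sp3_mid (f : List X → List X → List X → M) (u t : List X) (y : X) :
    Sp3 f (u ++ y :: t) = Sp3 (fun u1 u2 u3 => f u1 u2 (u3 ++ y :: t)) u
      + Sp (fun u1 u2 => Sp (fun t1 t2 => f u1 (u2 ++ y :: t1) t2) t) u
      + Sp3 (fun t1 t2 t3 => f (u ++ y :: t1) t2 t3) t := by
  simp only [Sp3, Sp_mid, Sp_add]

lemma Sp3_add (f g : List X → List X → List X → M) (w : List X) :
    Sp3 (fun u v t => f u v t + g u v t) w = Sp3 f w + Sp3 g w := by
  simp [Sp3, Sp_add]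

lemma Sp3_sub (f g : List X → List X → List X → M) (w : List X) :
    Sp3 (fun u v t => f u v t - g u v t) w = Sp3 f w - Sp3 g w := by
  simp [Sp3, Sp_sub]

lemma Sp3_smul (c : S) (f : List X → List X → List X → M) (w : List X) :
    Sp3 (fun u v t => c • f u v t) w = c • Sp3 f w := by
  simp [Sp3, Sp_smul]

lemma Sp3_map (φ : M →ₗ[S] N) (f : List X → List X → List X → M) (w : List X) :
    φ (Sp3 f w) = Sp3 (fun u v t => φ (f u v t)) w := by
  simp [Sp3, Sp_map]

lemma Sp3_zero (w : List X) : Sp3 (fun _ _ _ => (0 : M)) w = 0 := by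
  simp [Sp3, Sp_zero]

lemma Sp3_listmap {Y : Type} (g : Y → X) (f : List X → List X → List X → M) (w : List Y) :
    Sp3 f (w.map g) = Sp3 (fun u v t => f (u.map g) (v.map g) (t.map g)) w := by
  simp [Sp3, Sp_listmap]

lemma Sp5_smul (c : S) (f : List X → List X → List X → List X → List X → M) (w : List X) :
    Sp5 (fun a b d e g => c • f a b d e g) w = c • Sp5 f w := by
  simp [Sp5, Sp3_smul]

lemma Sp3_R (f : List X → List X → List X → List X → List X → M) (w : List X) :
    Sp3 (fun u v t => Sp3 (fun t1 t2 t3 => f u v t1 t2 t3) t) w = Sp5 f w := rfl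

lemma Sp3_L (f : List X → List X → List X → List X → List X → M) (w : List X) :
    Sp3 (fun u v t => Sp3 (fun u1 u2 u3 => f u1 u2 u3 v t) u) w = Sp5 f w := by
  simp only [Sp5, Sp3]
  have h1 : ∀ u r, Sp (fun v t => Sp (fun u1 r => Sp (fun u2 u3 => f u1 u2 u3 v t) r) u) r
      = Sp (fun u1 s => Sp (fun u2 u3 => Sp (fun v t => f u1 u2 u3 v t) r) s) u := by
    intro u r
    rw [Sp_comm]
    congr 1; funext u1 s
    rw [Sp_comm]
  simp only [h1]
  rw [Sp_assoc (fun u1 s r => Sp (fun u2 u3 => Sp (fun v t => f u1 u2 u3 v t) r) s)]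
  congr 1; funext u1 s
  rw [Sp_assoc (fun u2 u3 r => Sp (fun v t => f u1 u2 u3 v t) r)]

lemma Sp3_M (f : List X → List X → List X → List X → List X → M) (w : List X) :
    Sp3 (fun u v t => Sp3 (fun m1 m2 m3 => f u m1 m2 m3 t) v) w = Sp5 f w := by
  simp only [Sp5, Sp3]
  congr 1; funext u r
  rw [Sp_assoc (fun m1 s t => Sp (fun m2 m3 => f u m1 m2 m3 t) s)]
  congr 1; funext m1 s
  rw [Sp_assoc (fun m2 m3 t => f u m1 m2 m3 t)]

lemma Sp3_LR (f : List X → List X → List X → List X → List X → M) (w : List X) :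
    Sp3 (fun u v t => Sp (fun u1 u2 => Sp (fun t1 t2 => f u1 u2 v t1 t2) t) u) w = Sp5 f w := by
  simp only [Sp5, Sp3]
  have h1 : ∀ u r, Sp (fun v t => Sp (fun u1 u2 => Sp (fun t1 t2 => f u1 u2 v t1 t2) t) u) r
      = Sp (fun u1 u2 => Sp (fun v t => Sp (fun t1 t2 => f u1 u2 v t1 t2) t) r) u := by
    intro u r
    rw [Sp_comm]
  simp only [h1]
  rw [Sp_assoc (fun u1 u2 r => Sp (fun v t => Sp (fun t1 t2 => f u1 u2 v t1 t2) t) r)]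

/-- Linear insertion. -/
noncomputable def I (v : X →₀ S) (f : X → M) : M := Finsupp.linearCombination S f v

lemma I_eq (v : X →₀ S) (f : X → M) : I v f = v.sum fun x c => c • f x := rfl

lemma I_fadd (v : X →₀ S) (f g : X → M) : I v (fun x => f x + g x) = I v f + I v g := by
  simp [I_eq, Finsupp.sum_add]

lemma I_fsmul (v : X →₀ S) (c : S) (f : X → M) : I v (fun x => c • f x) = c • I v f := by
  simp only [I_eq, Finsupp.smul_sum]
  exact Finsupp.sum_congr fun x _ => smul_comm _ _ _

lemma I_fzero (v : X →₀ S) : I v (fun _ => (0 : M)) = 0 := by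
  simp [I_eq]

lemma I_zero (f : X → M) : I (0 : X →₀ S) f = 0 := by
  simp [I]

lemma I_map (φ : M →ₗ[S] N) (v : X →₀ S) (f : X → M) :
    φ (I v f) = I v (fun x => φ (f x)) := by
  simp [I_eq, Finsupp.sum]

lemma I_comm {Y : Type} (v : X →₀ S) (z : Y →₀ S) (f : X → Y → M) :
    I v (fun x => I z (fun y => f x y)) = I z (fun y => I v (fun x => f x y)) := by
  simp only [I_eq, Finsupp.smul_sum]
  rw [Finsupp.sum_comm]
  refine Finsupp.sum_congr fun x _ => Finsupp.sum_congr fun y _ => smul_comm _ _ _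

lemma I_Sp {Y : Type} (v : X →₀ S) (f : X → List Y → List Y → M) (w : List Y) :
    I v (fun x => Sp (fun a b => f x a b) w) = Sp (fun a b => I v (fun x => f x a b)) w := by
  simp only [I_eq, Finsupp.sum, Sp, Finset.smul_sum]
  rw [Finset.sum_comm]

lemma I_Sp3 {Y : Type} (v : X →₀ S) (f : X → List Y → List Y → List Y → M) (w : List Y) :
    I v (fun x => Sp3 (fun a b c => f x a b c) w)
      = Sp3 (fun a b c => I v (fun x => f x a b c)) w := by
  simp only [Sp3, I_Sp]

lemma I_Sp_left {Y : Type} (g : List Y → List Y → X →₀ S) (f : X → M) (w : List Y) :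
    I (Sp g w) f = Sp (fun a b => I (g a b) f) w := by
  unfold I
  rw [Sp_map]

lemma I_Sp3_left {Y : Type} (g : List Y → List Y → List Y → X →₀ S) (f : X → M) (w : List Y) :
    I (Sp3 g w) f = Sp3 (fun a b c => I (g a b c) f) w := by
  unfold I
  rw [Sp3_map]

lemma I_add (v z : X →₀ S) (f : X → M) : I (v + z) f = I v f + I z f := by simp [I]
lemma I_sub (v z : X →₀ S) (f : X → M) : I (v - z) f = I v f - I z f := by simp [I]
lemma I_smul (c : S) (v : X →₀ S) (f : X → M) : I (c • v) f = c • I v f := by simp [I]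

lemma I_I {Y : Type} (v : Y →₀ S) (g : Y → X →₀ S) (f : X → M) :
    I (I v g) f = I v (fun y => I (g y) f) := by
  show Finsupp.linearCombination S f (I v g) = _
  rw [I_map]; rfl

lemma I_single (x : X) (c : S) (f : X → M) : I (Finsupp.single x c) f = c • f x := by
  simp [I]

lemma sgn_add (a b : ℤ) : sgn S (a + b) = sgn S a * sgn S b := by
  unfold sgn
  by_cases ha : Even a <;> by_cases hb : Even b <;> simp [Int.even_add, ha, hb]

lemma sgn_congr {a b : ℤ} (h : (a : ZMod 2) = b) : sgn S a = sgn S b := by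
  have : Even a ↔ Even b := by
    rw [← ZMod.intCast_eq_zero_iff_even, ← ZMod.intCast_eq_zero_iff_even, h]
  unfold sgn
  simp [this]

variable (dg : κ → ℤ)

lemma epsO_nil : epsO dg ([] : List (Option κ)) = 0 := rfl
lemma epsO_cons (x : Option κ) (l : List (Option κ)) :
    epsO dg (x :: l) = dgO dg x - 1 + epsO dg l := by simp [epsO]
lemma epsO_append (l l' : List (Option κ)) :
    epsO dg (l ++ l') = epsO dg l + epsO dg l' := by simp [epsO]

variable {dg}

lemma I_homog {Q : List (Option κ) → Avs κ S} {dQ : ℤ} (hQ : IsHomog S dg Q dQ)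
    (v : List (Option κ)) (f g : Option κ → M)
    (h : ∀ y, dgO dg y = epsO dg v + dQ → f y = g y) : I (Q v) f = I (Q v) g := by
  simp only [I_eq]
  exact Finsupp.sum_congr fun x hx => by rw [h x (hQ v x hx)]

lemma I_swap {P Q : List (Option κ) → Avs κ S} {dP dQ : ℤ} (hP : IsHomog S dg P dP)
    (hQ : IsHomog S dg Q dQ) (u v : List (Option κ)) (G G' : Option κ → Option κ → M)
    (A B : S) (C D : Option κ → S)
    (h : ∀ x y, dgO dg y = epsO dg v + dQ → dgO dg x = epsO dg u + dP →
      (A * C y) • G x y = (B * D x) • G' x y) :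
    A • I (Q v) (fun y => C y • I (P u) (fun x => G x y))
      = B • I (P u) (fun x => D x • I (Q v) (fun y => G' x y)) := by
  simp only [← I_fsmul]
  rw [I_comm (P u) (Q v)]
  refine I_homog hQ _ _ _ fun y hy => I_homog hP _ _ _ fun x hx => ?_
  simpa [smul_smul] using h x y hy hx

lemma I_nest {Q : List (Option κ) → Avs κ S} {dQ : ℤ} 
    (hQ : IsHomog S dg Q dQ) (v : List (Option κ)) (G G' : Option κ → M)
    (A B B' : S) (C : Option κ → S)
    (h : ∀ y, dgO dg y = epsO dg v + dQ → (A * C y) • G y = (B * B') • G' y) :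
    A • I (Q v) (fun y => C y • G y) = B • B' • I (Q v) (fun y => G' y) := by
  simp only [← I_fsmul]
  refine I_homog hQ _ _ _ fun y hy => ?_
  simpa [smul_smul] using h y hy

variable (dg)

/-- Bar part of the transposed operator. -/
noncomputable def Lbar (P : List (Option κ) → Avs κ S) (dP : ℤ)
    (F : Option κ → List (Option κ) → M) (a : Option κ) (w : List (Option κ)) : M :=
  Sp3 (fun u v t => sgn S ((dP - 1) * (dgO dg a - 1 + epsO dg u)) •
    I (P v) (fun x => F a (u ++ x :: t))) w

/-- Cyclic part of the transposed operator. -/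
noncomputable def Lcyc (P : List (Option κ) → Avs κ S)
    (F : Option κ → List (Option κ) → M) (a : Option κ) (w : List (Option κ)) : M :=
  Sp3 (fun u m v => sgn S ((dgO dg a - 1 + epsO dg u + epsO dg m) * epsO dg v) •
    I (P (v ++ a :: u)) (fun x => F x m)) w

/-- The transposed operator. -/
noncomputable def Lam (P : List (Option κ) → Avs κ S) (dP : ℤ)
    (F : Option κ → List (Option κ) → M) (a : Option κ) (w : List (Option κ)) : M :=
  Lbar dg P dP F a w + Lcyc dg P F a w

lemma circC_eq (P Q : List (Option κ) → Avs κ S) (dQ : ℤ) (w : List (Option κ)) :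
    circC S dg P Q dQ w = Sp3 (fun u v t => sgn S ((dQ - 1) * epsO dg u) •
      I (Q v) (fun y => P (u ++ y :: t))) w := by
  unfold circC Sp3 Sp
  refine Finset.sum_congr rfl fun i hi => ?_
  have hi' : i ≤ w.length := by simpa [Nat.lt_succ_iff] using hi
  rw [← Finset.sum_filter]
  have : Finset.filter (fun v => i + v ≤ w.length) (Finset.range (w.length + 1))
      = Finset.range ((w.drop i).length + 1) := by
    ext v; simp; omega
  rw [this]
  refine Finset.sum_congr rfl fun v _ => ?_
  simp [insEval, I_eq, List.drop_drop]


lemma Sp_congr (f g : List X → List X → M) (w : List X)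
    (h : ∀ u v, u ++ v = w → f u v = g u v) : Sp f w = Sp g w :=
  Finset.sum_congr rfl fun _ _ => h _ _ (List.take_append_drop _ _)

lemma Sp3_congr (f g : List X → List X → List X → M) (w : List X)
    (h : ∀ u v t, u ++ (v ++ t) = w → f u v t = g u v t) : Sp3 f w = Sp3 g w :=
  Sp_congr _ _ _ fun u r hr => Sp_congr _ _ _ fun v t ht => h _ _ _ (by rw [ht, hr])

lemma Sp3_L' (g : List X → List X → List X → List X → List X → List X → M)
    (f : List X → List X → List X → List X → List X → M) (w : List X)
    (h : ∀ u1 u2 u3 v t, g (u1 ++ (u2 ++ u3)) v t u1 u2 u3 = f u1 u2 u3 v t) :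
    Sp3 (fun u v t => Sp3 (fun u1 u2 u3 => g u v t u1 u2 u3) u) w = Sp5 f w := by
  rw [← Sp3_L]
  exact Sp3_congr _ _ _ fun u v t _ => Sp3_congr _ _ _ fun u1 u2 u3 hu => by rw [← h, hu]

lemma Sp3_M' (g : List X → List X → List X → List X → List X → List X → M)
    (f : List X → List X → List X → List X → List X → M) (w : List X)
    (h : ∀ u1 u2 u3 v t, g v (u1 ++ (u2 ++ u3)) t u1 u2 u3 = f v u1 u2 u3 t) :
    Sp3 (fun u v t => Sp3 (fun u1 u2 u3 => g u v t u1 u2 u3) v) w = Sp5 f w := by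
  rw [← Sp3_M]
  exact Sp3_congr _ _ _ fun u v t _ => Sp3_congr _ _ _ fun u1 u2 u3 hu => by rw [← h, hu]

lemma Sp3_R' (g : List X → List X → List X → List X → List X → List X → M)
    (f : List X → List X → List X → List X → List X → M) (w : List X)
    (h : ∀ u1 u2 u3 u v, g u v (u1 ++ (u2 ++ u3)) u1 u2 u3 = f u v u1 u2 u3) :
    Sp3 (fun u v t => Sp3 (fun u1 u2 u3 => g u v t u1 u2 u3) t) w = Sp5 f w := by
  rw [← Sp3_R]
  exact Sp3_congr _ _ _ fun u v t _ => Sp3_congr _ _ _ fun u1 u2 u3 hu => by rw [← h, hu]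

lemma Sp3_LR' (g : List X → List X → List X → List X → List X → List X → List X → M)
    (f : List X → List X → List X → List X → List X → M) (w : List X)
    (h : ∀ u1 u2 v t1 t2, g (u1 ++ u2) v (t1 ++ t2) u1 u2 t1 t2 = f u1 u2 v t1 t2) :
    Sp3 (fun u v t => Sp (fun u1 u2 => Sp (fun t1 t2 => g u v t u1 u2 t1 t2) t) u) w
      = Sp5 f w := by
  rw [← Sp3_LR]
  exact Sp3_congr _ _ _ fun u v t _ => Sp_congr _ _ _ fun u1 u2 hu =>
    Sp_congr _ _ _ fun t1 t2 ht => by rw [← h, hu, ht]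

/-- Sum over outer left, outer right, middle. -/
lemma Sp3_LRo (f : List X → List X → List X → List X → List X → M) (w : List X) :
    Sp3 (fun u m v => Sp (fun v1 v2 => Sp (fun u1 u2 => f u1 u2 m v1 v2) u) v) w = Sp5 f w := by
  rw [← Sp3_LR]
  refine Sp3_congr _ _ _ fun u v t _ => ?_
  rw [Sp_comm]

lemma Sp3_LRo' (g : List X → List X → List X → List X → List X → List X → List X → M)
    (f : List X → List X → List X → List X → List X → M) (w : List X)
    (h : ∀ u1 u2 v t1 t2, g (u1 ++ u2) v (t1 ++ t2) u1 u2 t1 t2 = f u1 u2 v t1 t2) :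
    Sp3 (fun u v t => Sp (fun t1 t2 => Sp (fun u1 u2 => g u v t u1 u2 t1 t2) u) t) w
      = Sp5 f w := by
  rw [← Sp3_LRo]
  exact Sp3_congr _ _ _ fun u v t _ => Sp_congr _ _ _ fun t1 t2 ht =>
    Sp_congr _ _ _ fun u1 u2 hu => by rw [← h, hu, ht]

section Terms

variable (P Q : List (Option κ) → Avs κ S) (dP dQ : ℤ)
    (F : Option κ → List (Option κ) → M) (a : Option κ)

/-- `P` left of `Q`, both in the bar. -/
noncomputable def tLeft (u1 u2 u3 v t : List (Option κ)) : M :=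
    sgn S ((dQ - 1) * (dgO dg a - 1 + epsO dg (u1 ++ (u2 ++ u3)))) • I (Q v) (fun y =>
      sgn S ((dP - 1) * (dgO dg a - 1 + epsO dg u1)) • I (P u2) (fun x =>
        F a (u1 ++ x :: (u3 ++ y :: t))))

/-- `P` around `Q`, in the bar. -/
noncomputable def tIn (u1 u2 v t1 t2 : List (Option κ)) : M :=
    sgn S ((dQ - 1) * (dgO dg a - 1 + epsO dg (u1 ++ u2))) • I (Q v) (fun y =>
      sgn S ((dP - 1) * (dgO dg a - 1 + epsO dg u1)) • I (P (u2 ++ y :: t1)) (fun x =>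
        F a (u1 ++ x :: t2)))

/-- `P` right of `Q`, both in the bar. -/
noncomputable def tRight (u v t1 t2 t3 : List (Option κ)) : M :=
    sgn S ((dQ - 1) * (dgO dg a - 1 + epsO dg u)) • I (Q v) (fun y =>
      sgn S ((dP - 1) * (dgO dg a - 1 + epsO dg (u ++ y :: t1))) • I (P t2) (fun x =>
        F a ((u ++ y :: t1) ++ x :: t3)))

/-- `P` cyclic, `Q` inside `P` before `a`. -/
noncomputable def cLeft (u1 u2 u3 v t : List (Option κ)) : M :=
    sgn S ((dQ - 1) * (dgO dg a - 1 + epsO dg (u1 ++ (u2 ++ u3)))) • I (Q v) (fun y =>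
      sgn S ((dgO dg a - 1 + epsO dg u1 + epsO dg u2) * epsO dg (u3 ++ y :: t)) •
        I (P ((u3 ++ y :: t) ++ a :: u1)) (fun x => F x u2))

/-- `P` cyclic, `Q` in the bar outside of `P`. -/
noncomputable def cMid (u1 u2 v t1 t2 : List (Option κ)) : M :=
    sgn S ((dQ - 1) * (dgO dg a - 1 + epsO dg (u1 ++ u2))) • I (Q v) (fun y =>
      sgn S ((dgO dg a - 1 + epsO dg u1 + epsO dg (u2 ++ y :: t1)) * epsO dg t2) •
        I (P (t2 ++ a :: u1)) (fun x => F x (u2 ++ y :: t1)))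

/-- `P` cyclic, `Q` inside `P` after `a`. -/
noncomputable def cRight (u v t1 t2 t3 : List (Option κ)) : M :=
    sgn S ((dQ - 1) * (dgO dg a - 1 + epsO dg u)) • I (Q v) (fun y =>
      sgn S ((dgO dg a - 1 + epsO dg (u ++ y :: t1) + epsO dg t2) * epsO dg t3) •
        I (P (t3 ++ a :: (u ++ y :: t1))) (fun x => F x t2))

/-- `Q` cyclic, `P` in the bar. -/
noncomputable def dBar (u m1 m2 m3 v : List (Option κ)) : M :=
    sgn S ((dgO dg a - 1 + epsO dg u + epsO dg (m1 ++ (m2 ++ m3))) * epsO dg v) •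
      I (Q (v ++ a :: u)) (fun y =>
        sgn S ((dP - 1) * (dgO dg y - 1 + epsO dg m1)) • I (P m2) (fun x =>
          F y (m1 ++ x :: m3)))

/-- `Q` cyclic, `P` around it. -/
noncomputable def dCyc (u m1 m2 m3 v : List (Option κ)) : M :=
    sgn S ((dgO dg a - 1 + epsO dg u + epsO dg (m1 ++ (m2 ++ m3))) * epsO dg v) •
      I (Q (v ++ a :: u)) (fun y =>
        sgn S ((dgO dg y - 1 + epsO dg m1 + epsO dg m2) * epsO dg m3) •
          I (P (m3 ++ y :: m1)) (fun x => F x m2))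

lemma Lbar_Lbar (w : List (Option κ)) :
    Lbar dg Q dQ (Lbar dg P dP F) a w = Sp5 (tLeft dg P Q dP dQ F a) w
      + Sp5 (tIn dg P Q dP dQ F a) w + Sp5 (tRight dg P Q dP dQ F a) w := by
  simp only [Lbar, Sp3_mid, I_fadd, I_Sp3, I_Sp, smul_add, ← Sp3_smul, ← Sp_smul, Sp3_add]
  refine congrArg₂ (· + ·) (congrArg₂ (· + ·) ?_ ?_) ?_
  · exact Sp3_L' _ _ w fun _ _ _ _ _ => rfl
  · exact Sp3_LR' _ _ w fun _ _ _ _ _ => rfl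
  · exact Sp3_R' _ _ w fun _ _ _ _ _ => rfl

lemma Lbar_Lcyc (w : List (Option κ)) :
    Lbar dg Q dQ (Lcyc dg P F) a w = Sp5 (cLeft dg P Q dQ F a) w
      + Sp5 (cMid dg P Q dQ F a) w + Sp5 (cRight dg P Q dQ F a) w := by
  simp only [Lbar, Lcyc, Sp3_mid, I_fadd, I_Sp3, I_Sp, smul_add, ← Sp3_smul, ← Sp_smul, Sp3_add]
  refine congrArg₂ (· + ·) (congrArg₂ (· + ·) ?_ ?_) ?_
  · exact Sp3_L' _ _ w fun _ _ _ _ _ => rfl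
  · exact Sp3_LR' _ _ w fun _ _ _ _ _ => rfl
  · exact Sp3_R' _ _ w fun _ _ _ _ _ => rfl

lemma Lcyc_Lbar (w : List (Option κ)) :
    Lcyc dg Q (Lbar dg P dP F) a w = Sp5 (dBar dg P Q dP F a) w := by
  simp only [Lbar, Lcyc, I_Sp3, ← Sp3_smul]
  exact Sp3_M' _ _ w fun _ _ _ _ _ => rfl

lemma Lcyc_Lcyc (w : List (Option κ)) :
    Lcyc dg Q (Lcyc dg P F) a w = Sp5 (dCyc dg P Q F a) w := by
  simp only [Lcyc, I_Sp3, ← Sp3_smul]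
  exact Sp3_M' _ _ w fun _ _ _ _ _ => rfl

lemma zmod2_sq (x : ZMod 2) : x * x = x := by revert x; decide

variable {dg P Q dP dQ}

lemma Lbar_circ (hQ : IsHomog S dg Q dQ) (w : List (Option κ)) :
    Lbar dg (circC S dg P Q dQ) (dP + dQ - 1) F a w = Sp5 (tIn dg P Q dP dQ F a) w := by
  simp only [Lbar, circC_eq, I_Sp3_left, I_smul, I_I, ← Sp3_smul]
  refine Sp3_M' _ _ w fun u1 u2 u3 v t => ?_
  symm
  refine I_nest hQ _ _ _ _ _ _ _ fun y hy => ?_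
  congr 1
  rw [← sgn_add, ← sgn_add]
  refine sgn_congr ?_
  simp only [epsO_append]
  push_cast
  ring

lemma Lcyc_circ (hQ : IsHomog S dg Q dQ) (w : List (Option κ)) :
    Lcyc dg (circC S dg P Q dQ) F a w = Sp5 (cLeft dg P Q dQ F a) w
      + Sp5 (dCyc dg P Q F a) w + Sp5 (cRight dg P Q dQ F a) w := by
  simp only [Lcyc, circC_eq, Sp3_mid, I_add, I_Sp3_left, I_Sp_left, I_smul, I_I, smul_add,
    ← Sp3_smul, ← Sp_smul, Sp3_add]
  congr 1
  · congr 1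
    · refine Sp3_R' _ _ w fun u1 u2 u3 u v => ?_
      symm
      refine (I_nest hQ _ _ _ _ _ _ _ fun y hy => ?_)
      try simp only [List.append_assoc, List.cons_append]
      congr 1
      simp only [← sgn_add]
      refine sgn_congr ?_
      simp only [epsO_append, epsO_cons, hy]
      push_cast
      grind [zmod2_sq]
    · refine Sp3_LRo' _ _ w fun u1 u2 v t1 t2 => ?_
      symm
      refine (I_nest hQ _ _ _ _ _ _ _ fun y hy => ?_)
      try simp only [List.append_assoc, List.cons_append]
      congr 1
      simp only [← sgn_add]
      refine sgn_congr ?_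
      simp only [epsO_append, epsO_cons, hy]
      push_cast
      grind [zmod2_sq]
  · refine Sp3_L' _ _ w fun u1 u2 u3 v t => ?_
    symm
    refine (I_nest hQ _ _ _ _ _ _ _ fun y hy => ?_)
    try simp only [List.append_assoc, List.cons_append]
    congr 1
    simp only [← sgn_add]
    refine sgn_congr ?_
    simp only [epsO_append, epsO_cons, hy]
    push_cast
    grind [zmod2_sq]

lemma tLeft_swap (hP : IsHomog S dg P dP) (hQ : IsHomog S dg Q dQ) (w : List (Option κ)) :
    Sp5 (tRight dg P Q dP dQ F a) w
      = sgn S ((dP - 1) * (dQ - 1)) • Sp5 (tLeft dg Q P dQ dP F a) w := by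
  rw [← Sp5_smul]
  congr 1
  funext u v t1 t2 t3
  simp only [tRight, tLeft, smul_smul]
  refine I_swap hP hQ _ _ _ _ _ _ _ _ fun x y hy hx => ?_
  try simp only [List.append_assoc, List.cons_append]
  congr 1
  simp only [← sgn_add]
  refine sgn_congr ?_
  simp only [epsO_append, epsO_cons, hy]
  push_cast
  grind [zmod2_sq]

lemma cMid_swap (hP : IsHomog S dg P dP) (hQ : IsHomog S dg Q dQ) (w : List (Option κ)) :
    Sp5 (dBar dg P Q dP F a) w
      = sgn S ((dP - 1) * (dQ - 1)) • Sp5 (cMid dg Q P dP F a) w := by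
  rw [← Sp5_smul]
  congr 1
  funext u v t1 t2 t3
  simp only [dBar, cMid, smul_smul]
  refine I_swap hP hQ _ _ _ _ _ _ _ _ fun x y hy hx => ?_
  try simp only [List.append_assoc, List.cons_append]
  congr 1
  simp only [← sgn_add]
  refine sgn_congr ?_
  simp only [epsO_append, epsO_cons, hy, hx]
  push_cast
  grind [zmod2_sq]

lemma Lbar_fadd (G : Option κ → List (Option κ) → M) (w : List (Option κ)) :
    Lbar dg Q dQ (fun a w => F a w + G a w) a w = Lbar dg Q dQ F a w + Lbar dg Q dQ G a w := by
  simp only [Lbar, I_fadd, smul_add, Sp3_add]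

lemma Lcyc_fadd (G : Option κ → List (Option κ) → M) (w : List (Option κ)) :
    Lcyc dg Q (fun a w => F a w + G a w) a w = Lcyc dg Q F a w + Lcyc dg Q G a w := by
  simp only [Lcyc, I_fadd, smul_add, Sp3_add]

lemma Lam_add (w : List (Option κ)) :
    Lam dg Q dQ (Lam dg P dP F) a w
      = Lbar dg Q dQ (Lbar dg P dP F) a w + Lbar dg Q dQ (Lcyc dg P F) a w
        + (Lcyc dg Q (Lbar dg P dP F) a w + Lcyc dg Q (Lcyc dg P F) a w) := by
  rw [← Lbar_fadd, ← Lcyc_fadd]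
  rfl

lemma Lam_Lam (hQ : IsHomog S dg Q dQ) (w : List (Option κ)) :
    Lam dg Q dQ (Lam dg P dP F) a w
      = Lam dg (circC S dg P Q dQ) (dP + dQ - 1) F a w
        + (Sp5 (tLeft dg P Q dP dQ F a) w + Sp5 (tRight dg P Q dP dQ F a) w
          + Sp5 (cMid dg P Q dQ F a) w + Sp5 (dBar dg P Q dP F a) w) := by
  rw [Lam_add, Lbar_Lbar, Lbar_Lcyc, Lcyc_Lbar, Lcyc_Lcyc]
  conv_rhs => rw [Lam, Lbar_circ F a hQ, Lcyc_circ F a hQ]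
  abel

lemma sgn_mul_self (n : ℤ) : sgn S n * sgn S n = 1 := by
  unfold sgn; split_ifs <;> simp

lemma neg_sgn (n : ℤ) : -sgn S n = sgn S (1 + n) := by
  rw [sgn_add, show sgn S 1 = -1 by simp [sgn]]; ring

lemma R_swap (hP : IsHomog S dg P dP) (hQ : IsHomog S dg Q dQ) (w : List (Option κ)) :
    Sp5 (tLeft dg P Q dP dQ F a) w + Sp5 (tRight dg P Q dP dQ F a) w
          + Sp5 (cMid dg P Q dQ F a) w + Sp5 (dBar dg P Q dP F a) w
    = sgn S ((dP - 1) * (dQ - 1)) •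
      (Sp5 (tLeft dg Q P dQ dP F a) w + Sp5 (tRight dg Q P dQ dP F a) w
          + Sp5 (cMid dg Q P dP F a) w + Sp5 (dBar dg Q P dQ F a) w) := by
  rw [tLeft_swap F a hP hQ, cMid_swap F a hP hQ, tLeft_swap F a hQ hP, cMid_swap F a hQ hP]
  simp only [smul_add, smul_smul]
  rw [mul_comm (dQ - 1) (dP - 1), sgn_mul_self]
  simp only [one_smul]
  abel

lemma Lam_sub_smul (A B : List (Option κ) → Avs κ S) (c : S) (d : ℤ) (w : List (Option κ)) :
    Lam dg (fun ls => A ls - c • B ls) d F a w = Lam dg A d F a w - c • Lam dg B d F a w := by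
  simp only [Lam, Lbar, Lcyc, I_sub, I_smul, smul_sub, Sp3_sub, smul_add, ← Sp3_smul]
  simp only [smul_comm c]
  abel

lemma Lam_comm (hP : IsHomog S dg P dP) (hQ : IsHomog S dg Q dQ) (w : List (Option κ)) :
    Lam dg Q dQ (Lam dg P dP F) a w
      - sgn S ((dP - 1) * (dQ - 1)) • Lam dg P dP (Lam dg Q dQ F) a w
    = Lam dg (fun ls => circC S dg P Q dQ ls - sgn S ((dP - 1) * (dQ - 1)) • circC S dg Q P dP ls)
        (dP + dQ - 1) F a w := by
  rw [Lam_Lam F a hQ, Lam_Lam F a hP, R_swap F a hP hQ, Lam_sub_smul, add_comm dQ dP, smul_add]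
  generalize sgn S _ = c
  module

lemma Lam_map (φ : M →ₗ[S] N) (w : List (Option κ)) :
    φ (Lam dg P dP F a w) = Lam dg P dP (fun a w => φ (F a w)) a w := by
  simp only [Lam, Lbar, Lcyc, map_add, Sp3_map, map_smul, I_map]

end Terms

lemma genO_some (a : Option κ) (ms : List κ) :
    genO S a (ms.map some) = Finsupp.single (a, ms) 1 := by
  unfold genO
  rw [if_neg (by simp)]
  congr 2
  simp [List.reduceOption]

lemma genO_none (a : Option κ) (ls : List (Option κ)) (h : none ∈ ls) :
    genO S a ls = 0 := by
  unfold genO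
  rw [if_pos h]

lemma genBar_eq (a : Option κ) (pre : List κ) (v : Avs κ S) (post : List κ) :
    genBar S a pre v post
      = I v (fun x => genO S a (pre.map some ++ x :: post.map some)) := by
  rw [I_eq, genBar]
  refine Finsupp.sum_congr fun x _ => ?_
  cases x with
  | none => rw [genO_none _ _ (by simp)]; simp
  | some y =>
    have : pre.map some ++ some y :: post.map some = (pre ++ y :: post).map some := by simp
    rw [this, genO_some]; simp

lemma genA_eq (v : Avs κ S) (ms : List κ) :
    genA S v ms = I v (fun x => genO S x (ms.map some)) := by
  rw [I_eq, genA]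
  refine Finsupp.sum_congr fun x _ => ?_
  rw [genO_some]; simp

lemma epsO_map_some (ms : List κ) : epsO dg (ms.map some) = epsK dg ms := by
  simp [epsO, epsK, dgO, Function.comp_def]

lemma epsK_append (l l' : List κ) :
    epsK dg (l ++ l') = epsK dg l + epsK dg l' := by simp [epsK]

lemma Lgen_eq (P : List (Option κ) → Avs κ S) (dP : ℤ) (a : Option κ) (ms : List κ) :
    Lgen S dg P dP a ms = Lam dg P dP (genO S) a (ms.map some) := by
  unfold Lgen Lam
  congr 1
  · unfold Lbar
    rw [Sp3_listmap]
    simp only [epsO_map_some, ← genBar_eq]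
    unfold Sp3 Sp
    refine Finset.sum_congr rfl fun i hi => ?_
    have hi' : i ≤ ms.length := by simpa [Nat.lt_succ_iff] using hi
    rw [← Finset.sum_filter]
    have : Finset.filter (fun v => i + v ≤ ms.length) (Finset.range (ms.length + 1))
        = Finset.range ((ms.drop i).length + 1) := by
      ext v; simp; omega
    rw [this]
    refine Finset.sum_congr rfl fun v _ => ?_
    simp [muK, List.drop_drop]
  · unfold Lcyc
    rw [Sp3_listmap]
    simp only [epsO_map_some, ← genA_eq]
    unfold Sp3
    rw [← Sp_assoc (fun u m v => sgn S ((dgO dg a - 1 + epsK dg u + epsK dg m) * epsK dg v) •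
      genA S (P (v.map some ++ a :: u.map some)) m)]
    unfold Sp
    refine Finset.sum_congr rfl fun i hi => ?_
    have hi' : i ≤ ms.length := by simpa [Nat.lt_succ_iff] using hi
    rw [← Finset.sum_filter]
    have : Finset.filter (fun j => j ≤ i) (Finset.range (ms.length + 1))
        = Finset.range ((ms.take i).length + 1) := by
      ext v; simp; omega
    rw [this]
    refine Finset.sum_congr rfl fun j hj => ?_
    have hj' : j ≤ i := by simp at hj; omega
    have h1 : (ms.take i).take j = ms.take j := by rw [List.take_take, min_eq_left hj']
    have h2 : (ms.take i).drop j = (ms.drop j).take (i - j) := by rw [List.drop_take]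
    have h3 : epsK dg (ms.take i) = epsK dg (ms.take j) + epsK dg ((ms.drop j).take (i - j)) := by
      rw [← epsK_append, ← h1, ← h2, List.take_append_drop]
    have h4 : epsK dg ms = epsK dg (ms.take i) + epsK dg (ms.drop i) := by
      rw [← epsK_append, List.take_append_drop]
    rw [h1, h2]
    congr 2
    simp only [muK, List.take_length]
    rw [h4, h3]
    ring

/-- Cochains whose operator preserves degenerate chains. -/
def Good (P : List (Option κ) → Avs κ S) (dP : ℤ) : Prop :=
  ∀ a w, none ∈ w → Lam dg P dP (genO S) a w = 0

lemma Lop_genO (P : List (Option κ) → Avs κ S) (dP : ℤ) (h : Good dg P dP)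
    (a : Option κ) (w : List (Option κ)) :
    Lop S dg P dP (genO S a w) = Lam dg P dP (genO S) a w := by
  by_cases hw : none ∈ w
  · rw [h a w hw, genO_none _ _ hw, map_zero]
  · obtain ⟨ms, rfl⟩ : ∃ ms : List κ, w = ms.map some := by
      clear h
      induction w with
      | nil => exact ⟨[], rfl⟩
      | cons x w ih =>
        simp only [List.mem_cons, not_or] at hw
        obtain ⟨ms, rfl⟩ := ih hw.2
        cases x with
        | none => exact absurd rfl hw.1
        | some y => exact ⟨y :: ms, rfl⟩
    rw [genO_some, ← Lgen_eq]
    simp [Lop]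

lemma good_normalized (P : List (Option κ) → Avs κ S) (dP : ℤ) (hP : IsNormalized S P) :
    Good dg P dP := by
  intro a w hw
  have h1 : ∀ u v t : List (Option κ), u ++ (v ++ t) = w →
      none ∈ u ∨ none ∈ v ∨ none ∈ t := by
    rintro u v t rfl
    simpa using hw
  unfold Lam Lbar Lcyc
  rw [Sp3_congr _ (fun _ _ _ => 0), Sp3_zero, Sp3_congr _ (fun _ _ _ => 0), Sp3_zero, add_zero]
  · intro u m v h
    by_cases hm : none ∈ m
    · simp only [genO_none _ _ hm, I_fzero, smul_zero]
    · rw [hP _ (by have := h1 _ _ _ h; simp; tauto), I_zero, smul_zero]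
  · intro u v t h
    by_cases hm : none ∈ v
    · rw [hP _ hm, I_zero, smul_zero]
    · have : ∀ x, genO S a (u ++ x :: t) = 0 := fun x =>
        genO_none _ _ (by have := h1 _ _ _ h; simp; tauto)
      simp only [this, I_fzero, smul_zero]

lemma good_b (b : List (Option κ) → Avs κ S) (hb : IsUnitalCurvedAInf S dg b) :
    Good dg b 2 := by
  intro a w hw
  obtain ⟨pre, post, rfl⟩ := List.append_of_mem hw
  have hz : ∀ ls : List (Option κ), none ∈ ls → ls.length ≠ 2 → b ls = 0 := by
    intro ls h1 h2
    by_cases h3 : 3 ≤ ls.length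
    · exact hb.unitHi _ h3 h1
    · match ls, h1, h2, h3 with
      | [], h1, _, _ => simp at h1
      | [x], h1, _, _ =>
        obtain rfl : none = x := by simpa using h1
        exact hb.unit1
      | [_, _], _, h2, _ => simp at h2
      | _ :: _ :: _ :: _, _, _, h3 => simp at h3
  have g0 : ∀ (c : Option κ) (ls : List (Option κ)), none ∈ ls → genO S c ls = 0 :=
    fun c ls h => genO_none _ _ h
  unfold Lam Lbar Lcyc
  rw [Sp3_mid, Sp3_mid]
  -- the terms in which the unit survives
  rw [Sp3_congr _ (fun _ _ _ => 0) pre (fun u v t _ => by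
      simp only [g0 a (u ++ _ :: (t ++ none :: post)) (by simp), I_fzero, smul_zero]),
    Sp3_congr _ (fun _ _ _ => 0) post (fun u v t _ => by
      simp only [g0 a ((pre ++ none :: u) ++ _ :: t) (by simp), I_fzero, smul_zero])]
  rw [Sp_congr (fun u1 u2 => Sp (fun t1 t2 => sgn S ((dgO dg a - 1 + epsO dg u1 +
        epsO dg (u2 ++ none :: t1)) * epsO dg t2) •
        I (b (t2 ++ a :: u1)) fun x => genO S x (u2 ++ none :: t1)) post) (fun _ _ => 0) pre
    (fun u v _ => by
      rw [Sp_congr _ (fun _ _ => 0) post, Sp_zero]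
      intro s t _
      simp only [g0 _ (v ++ none :: s) (by simp), I_fzero, smul_zero])]
  simp only [Sp3_zero, Sp_zero, zero_add, add_zero]
  have hmid : Sp (fun u1 u2 => Sp (fun t1 t2 => sgn S ((2 - 1) * (dgO dg a - 1 + epsO dg u1)) •
        I (b (u2 ++ none :: t1)) fun x => genO S a (u1 ++ x :: t2)) post) pre
      = (if pre = [] then 0 else - (sgn S (dgO dg a - 1 + epsO dg pre) • genO S a (pre ++ post)))
      + (if post = [] then 0 else sgn S (dgO dg a - 1 + epsO dg pre) • genO S a (pre ++ post)) := by
    have hin0 : Sp (fun t1 t2 => sgn S ((2 - 1) * (dgO dg a - 1 + epsO dg pre)) •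
        I (b ([] ++ none :: t1)) fun x => genO S a (pre ++ x :: t2)) post
        = if post = [] then 0 else
          sgn S (dgO dg a - 1 + epsO dg pre) • genO S a (pre ++ post) := by
      cases post with
      | nil => simp [Sp_nil, hb.unit1, I_zero]
      | cons y q =>
        rw [Sp_cons, Sp_first]
        · simp [hb.unit1, I_zero, hb.unitL, I_single]
        · intro u v hu
          rw [hz _ (by simp) (by simpa using hu), I_zero, smul_zero]
    rcases List.eq_nil_or_concat pre with rfl | ⟨p, x, rfl⟩
    · rw [Sp_nil, hin0, if_pos rfl, zero_add]
    · rw [List.concat_eq_append] at hin0 ⊢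
      rw [Sp_snoc, hin0, Sp_last]
      · rw [if_neg (show ¬ (p ++ [x] = []) by simp)]
        congr 1
        rw [Sp_first]
        · simp only [List.nil_append, List.cons_append, hb.unitR, I_smul, I_single, one_smul,
            smul_smul, List.append_assoc]
          rw [← neg_smul, ← sgn_add]
          congr 1
          rw [neg_sgn]
          refine sgn_congr ?_
          simp only [epsO_append, epsO_cons, epsO_nil]
          push_cast
          ring
        · intro u v hu
          rw [hz _ (by simp) (by simpa using hu), I_zero, smul_zero]
      · intro u v hv
        rw [Sp_congr _ (fun _ _ => 0), Sp_zero]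
        intro s t _
        beta_reduce
        rw [hz _ (by simp) (by
          have := List.length_pos_of_ne_nil hv
          simp; omega), I_zero, smul_zero]
  rw [hmid]
  have hleft : Sp3 (fun u1 u2 u3 => sgn S ((dgO dg a - 1 + epsO dg u1 + epsO dg u2) *
        epsO dg (u3 ++ none :: post)) •
        I (b (u3 ++ none :: post ++ a :: u1)) fun x => genO S x u2) pre
      = if post = [] then sgn S (dgO dg a - 1 + epsO dg pre) • genO S a (pre ++ post) else 0 := by
    split_ifs with h
    · subst h
      unfold Sp3
      rw [Sp_first, Sp_last]
      · simp only [List.nil_append, List.cons_append, hb.unitL, I_single, one_smul,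
          List.append_nil, epsO_cons, epsO_nil]
        congr 1
        refine sgn_congr ?_
        simp only [dgO, Option.elim]
        push_cast
        grind
      · intro u v hv
        beta_reduce
        rw [hz _ (by simp) (by simpa using hv), I_zero, smul_zero]
      · intro u v hu
        rw [Sp_congr _ (fun _ _ => 0), Sp_zero]
        intro s t _
        beta_reduce
        rw [hz _ (by simp) (by
          have := List.length_pos_of_ne_nil hu
          simp; omega), I_zero, smul_zero]
    · rw [Sp3_congr _ (fun _ _ _ => 0), Sp3_zero]
      intro u v t _
      rw [hz _ (by simp) (by
        have := List.length_pos_of_ne_nil h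
        simp; omega), I_zero, smul_zero]
  rw [hleft]
  have hright : Sp3 (fun t1 t2 t3 => sgn S ((dgO dg a - 1 + epsO dg (pre ++ none :: t1) +
        epsO dg t2) * epsO dg t3) •
        I (b (t3 ++ a :: (pre ++ none :: t1))) fun x => genO S x t2) post
      = if pre = [] then - (sgn S (dgO dg a - 1 + epsO dg pre) • genO S a (pre ++ post))
        else 0 := by
    split_ifs with h
    · subst h
      unfold Sp3
      rw [Sp_first, Sp_last]
      · simp only [List.nil_append, hb.unitR, I_smul, I_single, one_smul,
          epsO_nil, smul_smul]
        rw [← neg_smul, ← sgn_add]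
        congr 1
        rw [neg_sgn]
        refine sgn_congr ?_
        push_cast
        ring
      · intro u v hv
        beta_reduce
        rw [hz _ (by simp) (by
          have := List.length_pos_of_ne_nil hv
          simp; omega), I_zero, smul_zero]
      · intro u v hu
        rw [Sp_congr _ (fun _ _ => 0), Sp_zero]
        intro s t _
        beta_reduce
        rw [hz _ (by simp) (by
          have := List.length_pos_of_ne_nil hu
          simp; omega), I_zero, smul_zero]
    · rw [Sp3_congr _ (fun _ _ _ => 0), Sp3_zero]
      intro u v t _
      rw [hz _ (by simp) (by
        have := List.length_pos_of_ne_nil h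
        simp; omega), I_zero, smul_zero]
  rw [hright]
  split_ifs <;> abel

end Aux
end NC

open NC in
/-- Let `(A,b)` be a unital A∞-algebra over a field `k` of characteristic `0`
and `P` a homogeneous normalized Hochschild cochain of arity `p` and degree `dP = |P|` in
`C^•(A)`.  Then
`∂_Hoch ∘ L_P − (−1)^{|P|−1} L_P ∘ ∂_Hoch = L_{∂P}`,
where `∂P := b∘P − (−1)^{|P|−1} P∘b` is the Hochschild cochain differential; in particular
`P ↦ L_P` is a chain map from the normalized shifted Hochschild cochain complex
`C̄^•(A)[1]` to the endomorphism complex `End_k(C_•(A))`. -/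
theorem statement1 {k : Type} [Field k] [CharZero k] {κ : Type} (dg : κ → ℤ)
    (b : List (Option κ) → Avs κ k) (hb : IsUnitalAInf k dg b)
    (P : List (Option κ) → Avs κ k) (p : ℕ) (dP : ℤ)
    (hPa : HasArity k P p) (hPn : IsNormalized k P) (hPh : IsHomog k dg P dP) :
    hochOp k dg b ∘ₗ Lop k dg P dP -
        sgn k (dP - 1) • (Lop k dg P dP ∘ₗ hochOp k dg b) =
      Lop k dg
        (fun ls => circC k dg b P dP ls - sgn k (dP - 1) • circC k dg P b 2 ls)
        (dP + 1) := by
  have hgen : ∀ (R : List (Option κ) → Avs κ k) (d : ℤ) (a : Option κ) (ms : List κ),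
      Lop k dg R d (Finsupp.single (a, ms) 1) = Lam dg R d (genO k) a (ms.map some) := by
    intro R d a ms
    rw [← Lgen_eq]
    simp [Lop]
  have hP := good_normalized dg P dP hPn
  have hB := good_b dg b hb.toIsUnitalCurvedAInf
  refine Finsupp.lhom_ext' fun ⟨a, ms⟩ => LinearMap.ext_ring ?_
  simp only [LinearMap.comp_apply, Finsupp.lsingle_apply, LinearMap.sub_apply,
    LinearMap.smul_apply, hochOp]
  rw [hgen, hgen, hgen, Lam_map, Lam_map]
  simp only [Lop_genO dg P dP hP, Lop_genO dg b 2 hB]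
  have := Lam_comm (genO k) a hb.homog hPh (ms.map some)
  rw [show ((2 : ℤ) - 1) * (dP - 1) = dP - 1 by ring, show (2 : ℤ) + dP - 1 = dP + 1 by ring] at this
  exact this
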